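/- Fix α ∈ (0,1), a bounded interval O ⊆ ℝ, and a strictly increasing function g : O → ℝ. Let Y and Ŷ be real random variables whose distributions are supported in O, whose cumulative distribution functions F and F̂ are continuous, and for which g(Y) and g(Ŷ) are integrable. If the expected difference of loss differences vanishes for all forecast pairs, i.e. E[d_{g,α}(Y, x₁, x₂)] = E[d_{g,α}(Ŷ, x₁, x₂)] for all x₁, x₂ ∈ O, then Y and Ŷ are equal in distribution: F(z) = F̂(z) for all z ∈ ℝ. Hence quantile forecasts cannot be evaluated robustly unless the proxy has the same distribution as the true target. -/

import Mathlib

/-!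
For `x₁ ≤ x₂` the loss difference `L(y, x₂) - L(y, x₁)` equals `g x₂ - g (clamp y)` minus the
constant `α (g x₂ - g x₁)`, where `clamp y` is the projection of `y` to `[x₁, x₂]`. In particular
it is bounded, and its expectation determines that of `g (clamp Y)`. As `g x₂ - g (clamp y)` lies
between `1{y ≤ x₁} (g x₂ - g x₁)` and `1{y < x₂} (g x₂ - g x₁)`, equality of the expectations gives
`P{Y ≤ x₁} ≤ P{Ŷ < x₂}` for all `x₁ < x₂` in `O`. Since both variables live in `O`, the events
`{Y ≤ z}` and `{Ŷ > z}` are exhausted, up to null sets, by the events `{Y ≤ x₁}` with `x₁ ≤ z` in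
`O` and `{Ŷ ≥ x₂}` with `x₂ > z` in `O`; so `F z ≤ F̂ z` for every `z`, and equality holds by
symmetry.
-/

open MeasureTheory ProbabilityTheory

section IntervalSupport

open Set
open scoped ENNReal

variable {E : Type*} [LinearOrder E] [TopologicalSpace E] [OrderTopology E]
  [SecondCountableTopology E] [MeasurableSpace E] {P Q : Measure E} {O : Set E} {z : E}

lemma measure_Iic_le_of_forall_mem_le {c : ℝ≥0∞} (hO : O.OrdConnected) (hP : ∀ᵐ y ∂P, y ∈ O)
    (hc : ∀ x ∈ O, x ≤ z → P (Iic x) ≤ c) : P (Iic z) ≤ c := by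
  have : (O ∩ Iic z).OrdConnected := hO.inter ordConnected_Iic
  calc
    P (Iic z) ≤ P (⋃ x : ↥(O ∩ Iic z), Iic (x : E)) := measure_mono_ae <| by
      filter_upwards [hP] with y hyO hyz using mem_iUnion.2 ⟨⟨y, hyO, hyz⟩, le_rfl⟩
    _ = ⨆ x : ↥(O ∩ Iic z), P (Iic (x : E)) :=
      Monotone.measure_iUnion fun _ _ hxy => Iic_subset_Iic.2 hxy
    _ ≤ c := iSup_le fun x => hc x x.2.1 x.2.2

lemma measure_Ioi_le_of_forall_mem_gt {c : ℝ≥0∞} (hO : O.OrdConnected) (hP : ∀ᵐ y ∂P, y ∈ O)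
    (hc : ∀ x ∈ O, z < x → P (Ici x) ≤ c) : P (Ioi z) ≤ c := by
  have : (O ∩ Ioi z).OrdConnected := hO.inter ordConnected_Ioi
  calc
    P (Ioi z) ≤ P (⋃ x : ↥(O ∩ Ioi z), Ici (x : E)) := measure_mono_ae <| by
      filter_upwards [hP] with y hyO hyz using mem_iUnion.2 ⟨⟨y, hyO, hyz⟩, le_rfl⟩
    _ = ⨆ x : ↥(O ∩ Ioi z), P (Ici (x : E)) :=
      Antitone.measure_iUnion fun _ _ hxy => Ici_subset_Ici.2 hxy
    _ ≤ c := iSup_le fun x => hc x x.2.1 x.2.2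

variable [BorelSpace E] [IsProbabilityMeasure P] [IsProbabilityMeasure Q]

lemma measure_Iic_le_measure_Iic_of_forall_mem_lt (hO : O.OrdConnected)
    (hP : ∀ᵐ y ∂P, y ∈ O) (hQ : ∀ᵐ y ∂Q, y ∈ O)
    (h : ∀ a ∈ O, ∀ b ∈ O, a < b → P (Iic a) ≤ Q (Iio b)) (z : E) :
    P (Iic z) ≤ Q (Iic z) := by
  refine measure_Iic_le_of_forall_mem_le hO hP fun a ha haz => ?_
  have htail : Q (Ioi z) ≤ P (Ioi a) := by
    refine measure_Ioi_le_of_forall_mem_gt hO hQ fun b hb hzb => ?_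
    rw [← compl_Iio, ← compl_Iic, prob_compl_eq_one_sub measurableSet_Iio,
      prob_compl_eq_one_sub measurableSet_Iic]
    exact tsub_le_tsub_left (h a ha b hb (haz.trans_lt hzb)) 1
  rw [← compl_Ioi, ← compl_Ioi, prob_compl_eq_one_sub measurableSet_Ioi,
    prob_compl_eq_one_sub measurableSet_Ioi]
  exact tsub_le_tsub_left htail 1

end IntervalSupport

section Clamp

open Set

variable {E β : Type*} [LinearOrder E] [Preorder β] {f : E → β} {a b : E}

lemma monotone_IccExtend_domRestrict (hf : MonotoneOn f (Icc a b)) (hab : a ≤ b) :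
    Monotone (IccExtend hab ((Icc a b).domRestrict f)) :=
  (monotoneOn_iff_monotone.mp hf).IccExtend hab

lemma IccExtend_domRestrict_mem_Icc (hf : MonotoneOn f (Icc a b)) (hab : a ≤ b) (y : E) :
    IccExtend hab ((Icc a b).domRestrict f) y ∈ Icc (f a) (f b) :=
  have hy := (projIcc a b hab y).2
  ⟨hf (left_mem_Icc.2 hab) hy hy.1, hf hy (right_mem_Icc.2 hab) hy.2⟩

end Clamp

section QuantileLoss

open Set

variable {E : Type*} [LinearOrder E] {g : E → ℝ} {a b : E}

/-- The quantile loss `L_{g,α}(y, x)` of the forecast `x` at the observation `y`. Observations and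
forecasts may lie in any linear order; only the values of `g` are real. -/
def quantileLoss (g : E → ℝ) (α : ℝ) (y x : E) : ℝ :=
  ((if y ≤ x then 1 else 0) - α) * (g x - g y)

/-- The loss difference `d_{g,α}(y, x₁, x₂)`, which compares the forecasts `x₁` and `x₂` at the
observation `y`; it is positive when `x₂` is the better one. -/
def quantileLossDiff (g : E → ℝ) (α : ℝ) (y x₁ x₂ : E) : ℝ :=
  quantileLoss g α y x₁ - quantileLoss g α y x₂

lemma quantileLossDiff_eq_sub_IccExtend (g : E → ℝ) (α : ℝ) (hab : a ≤ b) (y : E) :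
    quantileLossDiff g α y b a =
      g b - IccExtend hab ((Icc a b).domRestrict g) y - α * (g b - g a) := by
  simp only [quantileLossDiff, quantileLoss]
  rcases le_or_gt y a with hya | hay
  · rw [IccExtend_of_le_left hab _ hya, domRestrict_apply, if_pos hya, if_pos (hya.trans hab)]
    ring
  rw [if_neg hay.not_ge]
  rcases le_or_gt y b with hyb | hby
  · rw [IccExtend_of_mem hab _ ⟨hay.le, hyb⟩, domRestrict_apply, if_pos hyb]
    ring
  · rw [IccExtend_of_right_le hab _ hby.le, domRestrict_apply, if_neg hby.not_ge]
    ring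

variable [TopologicalSpace E] [OrderClosedTopology E] [MeasurableSpace E] [BorelSpace E]
  {P : Measure E}

lemma measurable_quantileLossDiff (hg : MonotoneOn g (Icc a b)) (hab : a ≤ b) (α : ℝ) :
    Measurable fun y => quantileLossDiff g α y b a := by
  simp only [quantileLossDiff_eq_sub_IccExtend g α hab]
  exact ((monotone_IccExtend_domRestrict hg hab).measurable.const_sub _).sub_const _

lemma integrable_sub_IccExtend_domRestrict [IsFiniteMeasure P] (hg : MonotoneOn g (Icc a b))
    (hab : a ≤ b) : Integrable (fun y => g b - IccExtend hab ((Icc a b).domRestrict g) y) P :=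
  (integrable_const _).sub <| .of_mem_Icc (g a) (g b)
    (monotone_IccExtend_domRestrict hg hab).measurable.aemeasurable
    (.of_forall (IccExtend_domRestrict_mem_Icc hg hab))

lemma integral_quantileLossDiff [IsProbabilityMeasure P] (hg : MonotoneOn g (Icc a b))
    (hab : a ≤ b) (α : ℝ) :
    ∫ y, quantileLossDiff g α y b a ∂P =
      ∫ y, (g b - IccExtend hab ((Icc a b).domRestrict g) y) ∂P - α * (g b - g a) := by
  simp only [quantileLossDiff_eq_sub_IccExtend g α hab]
  rw [integral_sub (integrable_sub_IccExtend_domRestrict hg hab) (integrable_const _)]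
  simp

lemma measureReal_Iic_mul_le_integral_sub_IccExtend [IsFiniteMeasure P]
    (hg : MonotoneOn g (Icc a b)) (hab : a ≤ b) :
    P.real (Iic a) * (g b - g a) ≤
      ∫ y, (g b - IccExtend hab ((Icc a b).domRestrict g) y) ∂P := by
  rw [← smul_eq_mul, ← integral_indicator_const _ measurableSet_Iic]
  refine integral_mono ((integrable_const _).indicator measurableSet_Iic)
    (integrable_sub_IccExtend_domRestrict hg hab) fun y => ?_
  by_cases hy : y ≤ a
  · rw [indicator_of_mem (mem_Iic.2 hy), IccExtend_of_le_left hab _ hy, domRestrict_apply]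
  · rw [indicator_of_notMem (notMem_Iic.2 (not_le.1 hy))]
    exact sub_nonneg.2 (IccExtend_domRestrict_mem_Icc hg hab y).2

lemma integral_sub_IccExtend_le_measureReal_Iio_mul [IsFiniteMeasure P]
    (hg : MonotoneOn g (Icc a b)) (hab : a ≤ b) :
    ∫ y, (g b - IccExtend hab ((Icc a b).domRestrict g) y) ∂P ≤
      P.real (Iio b) * (g b - g a) := by
  rw [← smul_eq_mul, ← integral_indicator_const _ measurableSet_Iio]
  refine integral_mono (integrable_sub_IccExtend_domRestrict hg hab)
    ((integrable_const _).indicator measurableSet_Iio) fun y => ?_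
  by_cases hy : y < b
  · rw [indicator_of_mem (mem_Iio.2 hy)]
    exact sub_le_sub_left (IccExtend_domRestrict_mem_Icc hg hab y).1 _
  · rw [indicator_of_notMem (notMem_Iio.2 (not_lt.1 hy)),
      IccExtend_of_right_le hab _ (not_lt.1 hy), domRestrict_apply, sub_self]

lemma measure_Iic_le_measure_Iio_of_integral_quantileLossDiff_eq
    {Q : Measure E} [IsProbabilityMeasure P] [IsProbabilityMeasure Q] {α : ℝ}
    (hg : StrictMonoOn g (Icc a b)) (hab : a < b)
    (h : ∫ y, quantileLossDiff g α y b a ∂P = ∫ y, quantileLossDiff g α y b a ∂Q) :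
    P (Iic a) ≤ Q (Iio b) := by
  have hmono := hg.monotoneOn
  rw [integral_quantileLossDiff hmono hab.le, integral_quantileLossDiff hmono hab.le,
    sub_left_inj] at h
  have hgap : 0 < g b - g a :=
    sub_pos.2 (hg (left_mem_Icc.2 hab.le) (right_mem_Icc.2 hab.le) hab)
  have hmul : P.real (Iic a) * (g b - g a) ≤ Q.real (Iio b) * (g b - g a) := calc
    _ ≤ ∫ y, (g b - IccExtend hab.le ((Icc a b).domRestrict g) y) ∂P :=
      measureReal_Iic_mul_le_integral_sub_IccExtend hmono hab.le
    _ = ∫ y, (g b - IccExtend hab.le ((Icc a b).domRestrict g) y) ∂Q := h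
    _ ≤ _ := integral_sub_IccExtend_le_measureReal_Iio_mul hmono hab.le
  exact (ENNReal.toReal_le_toReal (measure_ne_top _ _) (measure_ne_top _ _)).1
    (le_of_mul_le_mul_right hmul hgap)

end QuantileLoss

lemma measure_eq_of_integral_quantileLossDiff_eq {E : Type*} [LinearOrder E]
    [TopologicalSpace E] [OrderTopology E] [SecondCountableTopology E] [MeasurableSpace E]
    [BorelSpace E] {P Q : Measure E} [IsProbabilityMeasure P] [IsProbabilityMeasure Q]
    {O : Set E} {g : E → ℝ} {α : ℝ} (hO : O.OrdConnected) (hg : StrictMonoOn g O)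
    (hP : ∀ᵐ y ∂P, y ∈ O) (hQ : ∀ᵐ y ∂Q, y ∈ O)
    (h : ∀ a ∈ O, ∀ b ∈ O, a < b →
      ∫ y, quantileLossDiff g α y b a ∂P = ∫ y, quantileLossDiff g α y b a ∂Q) :
    P = Q := by
  have hgI {a b : E} (ha : a ∈ O) (hb : b ∈ O) : StrictMonoOn g (Set.Icc a b) :=
    hg.mono (hO.out ha hb)
  refine Measure.ext_of_Iic P Q fun z => le_antisymm
    (measure_Iic_le_measure_Iic_of_forall_mem_lt hO hP hQ (fun a ha b hb hab => ?_) z)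
    (measure_Iic_le_measure_Iic_of_forall_mem_lt hO hQ hP (fun a ha b hb hab => ?_) z)
  · exact measure_Iic_le_measure_Iio_of_integral_quantileLossDiff_eq (hgI ha hb) hab
      (h a ha b hb hab)
  · exact measure_Iic_le_measure_Iio_of_integral_quantileLossDiff_eq (hgI ha hb) hab
      (h a ha b hb hab).symm

theorem quantile_loss_robust_iff_equal_in_distribution_general
    {E Ω Ω' : Type*} [LinearOrder E] [TopologicalSpace E] [OrderTopology E]
    [SecondCountableTopology E] [MeasurableSpace E] [BorelSpace E]
    {mΩ : MeasurableSpace Ω} {mΩ' : MeasurableSpace Ω'}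
    (μ : Measure Ω) [IsProbabilityMeasure μ] (ν : Measure Ω') [IsProbabilityMeasure ν]
    (α : ℝ) (O : Set E) (hO : O.OrdConnected) (g : E → ℝ) (hg : StrictMonoOn g O)
    (Y : Ω → E) (Yhat : Ω' → E) (hY : AEMeasurable Y μ) (hYhat : AEMeasurable Yhat ν)
    (hY_supp : ∀ᵐ ω ∂μ, Y ω ∈ O) (hYhat_supp : ∀ᵐ ω ∂ν, Yhat ω ∈ O)
    (hrobust : ∀ x₁ ∈ O, ∀ x₂ ∈ O,
      ∫ ω, quantileLossDiff g α (Y ω) x₁ x₂ ∂μ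
        = ∫ ω, quantileLossDiff g α (Yhat ω) x₁ x₂ ∂ν) :
    IdentDistrib Y Yhat μ ν := by
  have := Measure.isProbabilityMeasure_map hY
  have := Measure.isProbabilityMeasure_map hYhat
  refine ⟨hY, hYhat, measure_eq_of_integral_quantileLossDiff_eq (α := α) hO hg
    ((ae_map_iff hY hO.measurableSet).2 hY_supp)
    ((ae_map_iff hYhat hO.measurableSet).2 hYhat_supp) fun a ha b hb hab => ?_⟩
  have hmeas := measurable_quantileLossDiff (hg.monotoneOn.mono (hO.out ha hb)) hab.le α
  rw [integral_map hY hmeas.aestronglyMeasurable, integral_map hYhat hmeas.aestronglyMeasurable]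
  exact hrobust b hb a ha

/-- **Quantile forecasts cannot be evaluated robustly under measurement error.**
Let `O` be a bounded interval, `g` strictly increasing on `O`, and let `Y, Yhat` be random
variables supported in `O` with continuous CDFs and integrable `g`-moments. If the expected
quantile-loss differences at level `α ∈ (0,1)` coincide for the target and the proxy for *all*
forecast pairs `x₁, x₂ ∈ O`, then `Y` and `Yhat` are equal in distribution. -/
theorem quantile_loss_robust_iff_equal_in_distribution
    {Ω : Type*} {mΩ : MeasurableSpace Ω} (μ : Measure Ω) [IsProbabilityMeasure μ]
    (α : ℝ) (hα : α ∈ Set.Ioo (0 : ℝ) 1)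
    (O : Set ℝ) (hO_bdd : Bornology.IsBounded O) (hO_conv : Convex ℝ O)
    (g : ℝ → ℝ) (hg : StrictMonoOn g O)
    (Y Yhat : Ω → ℝ) (hY_meas : Measurable Y) (hYhat_meas : Measurable Yhat)
    (hY_supp : ∀ᵐ ω ∂μ, Y ω ∈ O) (hYhat_supp : ∀ᵐ ω ∂μ, Yhat ω ∈ O)
    (hF_cont : Continuous fun z => cdf (μ.map Y) z)
    (hFhat_cont : Continuous fun z => cdf (μ.map Yhat) z)
    (hgY_int : Integrable (fun ω => g (Y ω)) μ)
    (hgYhat_int : Integrable (fun ω => g (Yhat ω)) μ)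
    (hrobust : ∀ x₁ ∈ O, ∀ x₂ ∈ O,
      ∫ ω, (((if Y ω ≤ x₁ then (1 : ℝ) else 0) - α) * (g x₁ - g (Y ω))
          - ((if Y ω ≤ x₂ then (1 : ℝ) else 0) - α) * (g x₂ - g (Y ω))) ∂μ
        = ∫ ω, (((if Yhat ω ≤ x₁ then (1 : ℝ) else 0) - α) * (g x₁ - g (Yhat ω))
            - ((if Yhat ω ≤ x₂ then (1 : ℝ) else 0) - α) * (g x₂ - g (Yhat ω))) ∂μ) :
    ∀ z : ℝ, cdf (μ.map Y) z = cdf (μ.map Yhat) z := by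
  intro z
  rw [(quantile_loss_robust_iff_equal_in_distribution_general μ μ α O hO_conv.ordConnected g hg
    Y Yhat hY_meas.aemeasurable hYhat_meas.aemeasurable hY_supp hYhat_supp hrobust).map_eq]
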